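/- Let b > 0 with b² irrational, let θ₀, θ₁, θ_t, θ_∞ ∈ ℝ with θ₀ + θ_t ≠ 0, let n ≥ 0 be an integer, and set Q = b + b^{−1}, α = −e^{2πb(ib/2 + θ₁ + θ_t)}, β = −e^{2πb(ib/2 + θ₀ − θ_∞)}, γ = −e^{2πb(ib/2 − θ₁ + θ_t)}, δ = −e^{2πb(ib/2 + θ₀ + θ_∞)}, q = e^{2iπb²}, σ_n = iQ/2 + θ₀ + θ_t + ibn. Define C(s) = 4 ∏_{ε=±1} cosh(πb(−ib/2 − θ_t + s + εθ₀)) cosh(πb(−ib/2 − θ₁ + s + εθ_∞)) / [ sinh(2πbs) sinh(πb(−2s + ib)) ]. Then C(σ_n) = α(1 − q^{n})(1 − βγ q^{n−1})(1 − βδ q^{n−1})(1 − γδ q^{n−1}) / [ (1 − αβγδ q^{2n−2})(1 − αβγδ q^{2n−1}) ] and C(−σ_n) = (1 − αβ q^{n})(1 − αγ q^{n})(1 − αδ q^{n})(1 − αβγδ q^{n−1}) / [ α (1 − αβγδ q^{2n−1})(1 − αβγδ q^{2n}) ]. -/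

import Mathlib

open Complex

/-- The coefficient `C(s)` of the renormalized Virasoro fusion-kernel difference operator. -/
noncomputable def Cfun (b θ0 θ1 θt θinf : ℝ) (s : ℂ) : ℂ :=
  4 * (Complex.cosh (Real.pi * b * (-(I * b) / 2 - θt + s + θ0)) *
      Complex.cosh (Real.pi * b * (-(I * b) / 2 - θt + s - θ0)) *
      (Complex.cosh (Real.pi * b * (-(I * b) / 2 - θ1 + s + θinf)) *
        Complex.cosh (Real.pi * b * (-(I * b) / 2 - θ1 + s - θinf)))) /
    (Complex.sinh (2 * Real.pi * b * s) * Complex.sinh (Real.pi * b * (-(2 * s) + I * b)))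

/-!
Write `E x = e^{2πbx}`. Since `2 cosh (πbx) = E (-x/2) (1 + E x)`, and similarly for `sinh`, the
coefficient `C(s)` is a monomial times a quotient of products of factors `1 + E z` and `1 - E z`
with `z` affine in `s`; the reflection `s ↦ -s` amounts to changing the signs of `ib`, `θ₁`, `θ_t`.
At `s = σ_n` the summand `i/(2b)` of `σ_n` contributes `E (i/(2b)) = -1`, which turns these factors
one by one into the factors `1 - α ⋯ q^k` of the recurrence coefficients, while the monomial is `α`
for `C(σ_n)` and `α⁻¹` for `C(-σ_n)`. For real `b` and momenta no denominator vanishes, because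
`|αβγδ q^k| = e^{4πb(θ₀ + θ_t)}` differs from `1` when `θ₀ + θ_t ≠ 0`.
-/

open scoped Real

/-- The exponential `e^{2πbx}` of a momentum `x`: the Askey–Wilson parameters are of the form
`-momentumExp b x`, and the base `q` is `momentumExp b (I * b)`. -/
noncomputable def momentumExp (b x : ℂ) : ℂ :=
  exp (2 * π * b * x)

/-- The coefficient `C(s)` of the fusion-kernel difference operator at complex values of the
parameters, with the shift `ib` replaced by an independent variable `w` so that the reflection
`s ↦ -s` becomes a symmetry; `Cfun` is the case of real parameters and `w = ib`. -/
noncomputable def fusionCoeff (b w θ0 θ1 θt θinf s : ℂ) : ℂ :=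
  4 * (cosh (π * b * (-w / 2 - θt + s + θ0)) * cosh (π * b * (-w / 2 - θt + s - θ0)) *
      (cosh (π * b * (-w / 2 - θ1 + s + θinf)) * cosh (π * b * (-w / 2 - θ1 + s - θinf)))) /
    (sinh (2 * π * b * s) * sinh (π * b * (-(2 * s) + w)))

theorem Cfun_eq_fusionCoeff (b θ0 θ1 θt θinf : ℝ) (s : ℂ) :
    Cfun b θ0 θ1 θt θinf s = fusionCoeff b (I * b) θ0 θ1 θt θinf s :=
  rfl

/-- The correspondence (4.6) between the fusion-kernel parameters and the Askey–Wilson parameters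
`α`, `β`, `γ`, `δ` and base `q`, for complex `b` and momenta. -/
structure ParameterCorrespondence (b θ0 θ1 θt θinf α β γ δ q : ℂ) : Prop where
  α_eq : α = -momentumExp b (I * b / 2 + θ1 + θt)
  β_eq : β = -momentumExp b (I * b / 2 + θ0 - θinf)
  γ_eq : γ = -momentumExp b (I * b / 2 - θ1 + θt)
  δ_eq : δ = -momentumExp b (I * b / 2 + θ0 + θinf)
  q_eq : q = exp (2 * I * π * b ^ 2)

section momentumExp

variable {b : ℂ}

theorem momentumExp_ne_zero (b x : ℂ) : momentumExp b x ≠ 0 :=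
  exp_ne_zero _

theorem momentumExp_zero (b : ℂ) : momentumExp b 0 = 1 := by
  simp [momentumExp]

theorem momentumExp_add (b x y : ℂ) :
    momentumExp b (x + y) = momentumExp b x * momentumExp b y := by
  rw [momentumExp, mul_add, exp_add, ← momentumExp, ← momentumExp]

theorem momentumExp_add_half_period (hb : b ≠ 0) (x : ℂ) :
    momentumExp b (x + I * b⁻¹ / 2) = -momentumExp b x := by
  have half_period : 2 * π * b * (I * b⁻¹ / 2) = π * I := by field_simp
  rw [momentumExp_add, momentumExp, momentumExp, half_period, exp_pi_mul_I, mul_neg_one]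

theorem momentumExp_add_period (hb : b ≠ 0) (x : ℂ) :
    momentumExp b (x + I * b⁻¹) = momentumExp b x := by
  rw [← add_halves (I * b⁻¹), ← add_assoc, momentumExp_add_half_period hb,
    momentumExp_add_half_period hb, neg_neg]

theorem momentumExp_ofReal_ne_one {b : ℝ} (hb : b ≠ 0) {x : ℂ} (hx : x.re ≠ 0) :
    momentumExp b x ≠ 1 := by
  intro h
  have norm_eq_one : Real.exp (2 * π * b * x.re) = 1 := by
    simpa [momentumExp, norm_exp, mul_assoc] using congrArg norm h
  simp [Real.pi_ne_zero, hb, hx] at norm_eq_one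

theorem two_mul_cosh_pi_mul (b x : ℂ) :
    2 * cosh (π * b * x) = momentumExp b (-x / 2) * (1 + momentumExp b x) := by
  rw [two_cosh, mul_one_add, ← momentumExp_add, momentumExp, momentumExp, add_comm]
  ring_nf

theorem two_mul_sinh_pi_mul (b x : ℂ) :
    2 * sinh (π * b * x) = -(momentumExp b (-x / 2) * (1 - momentumExp b x)) := by
  rw [two_sinh, mul_one_sub, ← momentumExp_add, momentumExp, momentumExp, neg_sub]
  ring_nf

theorem four_mul_cosh_mul_cosh (b x y : ℂ) :
    4 * (cosh (π * b * (x + y)) * cosh (π * b * (x - y))) =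
      momentumExp b (-x) * ((1 + momentumExp b (x + y)) * (1 + momentumExp b (x - y))) := by
  rw [show -x = -(x + y) / 2 + -(x - y) / 2 by ring, momentumExp_add]
  linear_combination (2 * cosh (π * b * (x - y))) * two_mul_cosh_pi_mul b (x + y) +
    momentumExp b (-(x + y) / 2) * (1 + momentumExp b (x + y)) * two_mul_cosh_pi_mul b (x - y)

theorem four_mul_sinh_mul_sinh (b w s : ℂ) :
    4 * (sinh (2 * π * b * s) * sinh (π * b * (-(2 * s) + w))) =
      -(momentumExp b (w / 2 - 2 * s) *
        ((1 - momentumExp b (2 * s - w)) * (1 - momentumExp b (2 * s)))) := by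
  rw [show 2 * π * b * s = π * b * (2 * s) by ring,
    show π * b * (-(2 * s) + w) = -(π * b * (2 * s - w)) by ring, sinh_neg,
    show w / 2 - 2 * s = -(2 * s) / 2 + -(2 * s - w) / 2 by ring, momentumExp_add]
  linear_combination (-2 * sinh (π * b * (2 * s - w))) * two_mul_sinh_pi_mul b (2 * s) +
    momentumExp b (-(2 * s) / 2) * (1 - momentumExp b (2 * s)) * two_mul_sinh_pi_mul b (2 * s - w)

end momentumExp

section fusionCoeff

variable {b w s : ℂ} (θ0 θ1 θt θinf : ℂ)

theorem fusionCoeff_mul (h₁ : momentumExp b (2 * s - w) ≠ 1) (h₂ : momentumExp b (2 * s) ≠ 1) :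
    fusionCoeff b w θ0 θ1 θt θinf s *
        ((1 - momentumExp b (2 * s - w)) * (1 - momentumExp b (2 * s))) =
      -momentumExp b (w / 2 + θ1 + θt) *
        ((1 + momentumExp b (-w / 2 - θt + s + θ0)) * (1 + momentumExp b (-w / 2 - θt + s - θ0)) *
          ((1 + momentumExp b (-w / 2 - θ1 + s + θinf)) *
            (1 + momentumExp b (-w / 2 - θ1 + s - θinf)))) := by
  have sinh_factors := four_mul_sinh_mul_sinh b w s
  have sinh_ne_zero : sinh (2 * π * b * s) * sinh (π * b * (-(2 * s) + w)) ≠ 0 := by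
    refine right_ne_zero_of_mul (a := 4) (sinh_factors ▸ neg_ne_zero.2 ?_)
    exact mul_ne_zero (momentumExp_ne_zero _ _)
      (mul_ne_zero (sub_ne_zero.2 h₁.symm) (sub_ne_zero.2 h₂.symm))
  have cosh_factors := congrArg₂ (· * ·)
    (four_mul_cosh_mul_cosh b (-w / 2 - θt + s) θ0)
    (four_mul_cosh_mul_cosh b (-w / 2 - θ1 + s) θinf)
  have monomial : momentumExp b (-(-w / 2 - θt + s)) * momentumExp b (-(-w / 2 - θ1 + s)) =
      momentumExp b (w / 2 + θ1 + θt) * momentumExp b (w / 2 - 2 * s) := by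
    rw [← momentumExp_add, ← momentumExp_add]
    ring_nf
  rw [mul_mul_mul_comm (momentumExp b _), monomial] at cosh_factors
  rw [fusionCoeff, div_mul_eq_mul_div, div_eq_iff sinh_ne_zero]
  linear_combination
    (1 - momentumExp b (2 * s - w)) * (1 - momentumExp b (2 * s)) / 4 * cosh_factors +
    momentumExp b (w / 2 + θ1 + θt) / 4 *
        ((1 + momentumExp b (-w / 2 - θt + s + θ0)) * (1 + momentumExp b (-w / 2 - θt + s - θ0)) *
          ((1 + momentumExp b (-w / 2 - θ1 + s + θinf)) *
            (1 + momentumExp b (-w / 2 - θ1 + s - θinf)))) * sinh_factors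

theorem fusionCoeff_neg (b w s : ℂ) :
    fusionCoeff b w θ0 θ1 θt θinf (-s) = fusionCoeff b (-w) θ0 (-θ1) (-θt) θinf s := by
  have cosh_reflect (θ y : ℂ) : cosh (π * b * (-w / 2 - θ + -s + y)) =
      cosh (π * b * (-(-w) / 2 - -θ + s + -y)) := by
    rw [← cosh_neg]
    ring_nf
  have sinh_reflect : sinh (2 * π * b * -s) * sinh (π * b * (-(2 * -s) + w)) =
      sinh (2 * π * b * s) * sinh (π * b * (-(2 * s) + -w)) := by
    rw [← neg_mul_neg, ← sinh_neg, ← sinh_neg]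
    ring_nf
  simp only [fusionCoeff, sub_eq_add_neg _ θ0, sub_eq_add_neg _ θinf, cosh_reflect, sinh_reflect,
    neg_neg]
  ring

end fusionCoeff

section AskeyWilson

theorem base_zpow {b q : ℂ} (hq : q = exp (2 * I * π * b ^ 2)) (k : ℤ) :
    q ^ k = momentumExp b (I * b * k) := by
  rw [hq, ← exp_int_mul, momentumExp]
  ring_nf

theorem mul_base_zpow_eq_neg_momentumExp {b q P u z : ℂ} {k : ℤ} (hb : b ≠ 0)
    (hq : q = exp (2 * I * π * b ^ 2)) (hP : P = momentumExp b u)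
    (hz : z = u + I * b * k + I * b⁻¹ / 2) : P * q ^ k = -momentumExp b z := by
  rw [hz, momentumExp_add_half_period hb, momentumExp_add, ← hP, ← base_zpow hq, neg_neg]

theorem mul_base_zpow_eq_momentumExp {b q P u z : ℂ} {k : ℤ} (hb : b ≠ 0)
    (hq : q = exp (2 * I * π * b ^ 2)) (hP : P = momentumExp b u)
    (hz : z = u + I * b * k + I * b⁻¹) : P * q ^ k = momentumExp b z := by
  rw [hz, momentumExp_add_period hb, momentumExp_add, ← hP, ← base_zpow hq]

theorem mul_eq_momentumExp_add {b x y α β : ℂ} (hα : α = -momentumExp b x)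
    (hβ : β = -momentumExp b y) : α * β = momentumExp b (x + y) := by
  rw [hα, hβ, neg_mul_neg, momentumExp_add]

namespace ParameterCorrespondence

variable {α β γ δ q : ℂ}

theorem prod_eq {b θ0 θ1 θt θinf : ℂ}
    (h : ParameterCorrespondence b θ0 θ1 θt θinf α β γ δ q) :
    α * β * γ * δ = momentumExp b (2 * (I * b + θ0 + θt)) := by
  rw [mul_assoc (α * β), mul_eq_momentumExp_add h.α_eq h.β_eq,
    mul_eq_momentumExp_add h.γ_eq h.δ_eq, ← momentumExp_add]
  ring_nf

theorem prod_mul_zpow_ne_one {b θ0 θ1 θt θinf : ℝ}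
    (h : ParameterCorrespondence b θ0 θ1 θt θinf α β γ δ q) (hb : b ≠ 0) (hθ : θ0 + θt ≠ 0)
    (k : ℤ) : α * β * γ * δ * q ^ k ≠ 1 := by
  rw [h.prod_eq, base_zpow h.q_eq, ← momentumExp_add]
  exact momentumExp_ofReal_ne_one hb (by simpa using hθ)

variable {b θ0 θ1 θt θinf σn : ℂ} {n : ℤ}

theorem fusionCoeff_eq (h : ParameterCorrespondence b θ0 θ1 θt θinf α β γ δ q) (hb : b ≠ 0)
    (hσ : σn = I * (b + b⁻¹) / 2 + θ0 + θt + I * b * n)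
    (h₁ : α * β * γ * δ * q ^ (2 * n - 2) ≠ 1) (h₂ : α * β * γ * δ * q ^ (2 * n - 1) ≠ 1) :
    fusionCoeff b (I * b) θ0 θ1 θt θinf σn =
      α * (1 - q ^ n) * (1 - β * γ * q ^ (n - 1)) * (1 - β * δ * q ^ (n - 1)) *
          (1 - γ * δ * q ^ (n - 1)) /
        ((1 - α * β * γ * δ * q ^ (2 * n - 2)) * (1 - α * β * γ * δ * q ^ (2 * n - 1))) := by
  have pole₁ : α * β * γ * δ * q ^ (2 * n - 2) = momentumExp b (2 * σn - I * b) :=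
    mul_base_zpow_eq_momentumExp hb h.q_eq h.prod_eq (by rw [hσ]; push_cast; ring)
  have pole₂ : α * β * γ * δ * q ^ (2 * n - 1) = momentumExp b (2 * σn) :=
    mul_base_zpow_eq_momentumExp hb h.q_eq h.prod_eq (by rw [hσ]; push_cast; ring)
  have hq : 1 * q ^ n = -momentumExp b (-(I * b) / 2 - θt + σn - θ0) :=
    mul_base_zpow_eq_neg_momentumExp hb h.q_eq (momentumExp_zero b).symm (by rw [hσ]; ring)
  have hβγ : β * γ * q ^ (n - 1) = -momentumExp b (-(I * b) / 2 - θ1 + σn - θinf) :=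
    mul_base_zpow_eq_neg_momentumExp hb h.q_eq (mul_eq_momentumExp_add h.β_eq h.γ_eq)
      (by rw [hσ]; push_cast; ring)
  have hβδ : β * δ * q ^ (n - 1) = -momentumExp b (-(I * b) / 2 - θt + σn + θ0) :=
    mul_base_zpow_eq_neg_momentumExp hb h.q_eq (mul_eq_momentumExp_add h.β_eq h.δ_eq)
      (by rw [hσ]; push_cast; ring)
  have hγδ : γ * δ * q ^ (n - 1) = -momentumExp b (-(I * b) / 2 - θ1 + σn + θinf) :=
    mul_base_zpow_eq_neg_momentumExp hb h.q_eq (mul_eq_momentumExp_add h.γ_eq h.δ_eq)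
      (by rw [hσ]; push_cast; ring)
  rw [eq_div_iff (mul_ne_zero (sub_ne_zero.2 h₁.symm) (sub_ne_zero.2 h₂.symm))]
  rw [pole₁] at h₁ ⊢
  rw [pole₂] at h₂ ⊢
  rw [fusionCoeff_mul _ _ _ _ h₁ h₂, ← h.α_eq, ← one_mul (q ^ n), hq, hβγ, hβδ, hγδ]
  ring

theorem fusionCoeff_neg_eq (h : ParameterCorrespondence b θ0 θ1 θt θinf α β γ δ q) (hb : b ≠ 0)
    (hσ : σn = I * (b + b⁻¹) / 2 + θ0 + θt + I * b * n)
    (h₂ : α * β * γ * δ * q ^ (2 * n - 1) ≠ 1) (h₃ : α * β * γ * δ * q ^ (2 * n) ≠ 1) :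
    fusionCoeff b (I * b) θ0 θ1 θt θinf (-σn) =
      (1 - α * β * q ^ n) * (1 - α * γ * q ^ n) * (1 - α * δ * q ^ n) *
          (1 - α * β * γ * δ * q ^ (n - 1)) /
        (α * ((1 - α * β * γ * δ * q ^ (2 * n - 1)) * (1 - α * β * γ * δ * q ^ (2 * n)))) := by
  have pole₂ : α * β * γ * δ * q ^ (2 * n - 1) = momentumExp b (2 * σn) :=
    mul_base_zpow_eq_momentumExp hb h.q_eq h.prod_eq (by rw [hσ]; push_cast; ring)
  have pole₃ : α * β * γ * δ * q ^ (2 * n) = momentumExp b (2 * σn - -(I * b)) :=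
    mul_base_zpow_eq_momentumExp hb h.q_eq h.prod_eq (by rw [hσ]; push_cast; ring)
  have hαβ : α * β * q ^ n = -momentumExp b (-(-(I * b)) / 2 - -θ1 + σn - θinf) :=
    mul_base_zpow_eq_neg_momentumExp hb h.q_eq (mul_eq_momentumExp_add h.α_eq h.β_eq)
      (by rw [hσ]; ring)
  have hαγ : α * γ * q ^ n = -momentumExp b (-(-(I * b)) / 2 - -θt + σn - θ0) :=
    mul_base_zpow_eq_neg_momentumExp hb h.q_eq (mul_eq_momentumExp_add h.α_eq h.γ_eq)
      (by rw [hσ]; ring)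
  have hαδ : α * δ * q ^ n = -momentumExp b (-(-(I * b)) / 2 - -θ1 + σn + θinf) :=
    mul_base_zpow_eq_neg_momentumExp hb h.q_eq (mul_eq_momentumExp_add h.α_eq h.δ_eq)
      (by rw [hσ]; ring)
  have hαβγδ : α * β * γ * δ * q ^ (n - 1) =
      -momentumExp b (-(-(I * b)) / 2 - -θt + σn + θ0) :=
    mul_base_zpow_eq_neg_momentumExp hb h.q_eq h.prod_eq (by rw [hσ]; push_cast; ring)
  have α_inv : α * -momentumExp b (-(I * b) / 2 + -θ1 + -θt) = 1 := by
    rw [mul_eq_momentumExp_add h.α_eq rfl, ← momentumExp_zero b]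
    ring_nf
  rw [eq_div_iff (mul_ne_zero (left_ne_zero_of_mul_eq_one α_inv)
    (mul_ne_zero (sub_ne_zero.2 h₂.symm) (sub_ne_zero.2 h₃.symm)))]
  rw [pole₂] at h₂ ⊢
  rw [pole₃] at h₃ ⊢
  rw [fusionCoeff_neg, mul_left_comm, mul_comm (1 - momentumExp b (2 * σn)),
    fusionCoeff_mul _ _ _ _ h₃ h₂, ← mul_assoc, α_inv, hαβ, hαγ, hαδ, hαβγδ]
  ring

end ParameterCorrespondence

end AskeyWilson

theorem stmt19_general {b θ0 θ1 θt θinf α β γ δ q σn : ℂ} {n : ℤ} (hb : b ≠ 0)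
    (h : ParameterCorrespondence b θ0 θ1 θt θinf α β γ δ q)
    (hσ : σn = I * (b + b⁻¹) / 2 + θ0 + θt + I * b * n)
    (h₁ : α * β * γ * δ * q ^ (2 * n - 2) ≠ 1) (h₂ : α * β * γ * δ * q ^ (2 * n - 1) ≠ 1)
    (h₃ : α * β * γ * δ * q ^ (2 * n) ≠ 1) :
    fusionCoeff b (I * b) θ0 θ1 θt θinf σn =
      α * (1 - q ^ n) * (1 - β * γ * q ^ (n - 1)) * (1 - β * δ * q ^ (n - 1)) *
          (1 - γ * δ * q ^ (n - 1)) /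
        ((1 - α * β * γ * δ * q ^ (2 * n - 2)) * (1 - α * β * γ * δ * q ^ (2 * n - 1)))
    ∧ fusionCoeff b (I * b) θ0 θ1 θt θinf (-σn) =
      (1 - α * β * q ^ n) * (1 - α * γ * q ^ n) * (1 - α * δ * q ^ n) *
          (1 - α * β * γ * δ * q ^ (n - 1)) /
        (α * ((1 - α * β * γ * δ * q ^ (2 * n - 1)) * (1 - α * β * γ * δ * q ^ (2 * n)))) :=
  ⟨h.fusionCoeff_eq hb hσ h₁ h₂, h.fusionCoeff_neg_eq hb hσ h₂ h₃⟩

/-- Equation (4.12) of the paper: the coefficients `C(±σ_s^{(n)})` of the renormalized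
Virasoro fusion-kernel difference operator, evaluated at the discretized internal momentum
`σ_n = iQ/2 + θ₀ + θ_t + ibn`, equal the recurrence coefficients `a⁻_n` and `a⁺_n` of the
Askey–Wilson polynomials, under the parameter correspondence (4.6). -/
theorem stmt19 (b θ0 θ1 θt θinf : ℝ) (hb : 0 < b) (hb2 : Irrational (b ^ 2))
    (hθ : θ0 + θt ≠ 0) (n : ℕ) (α β γ δ q σn : ℂ)
    (hα : α = -Complex.exp (2 * Real.pi * b * (I * b / 2 + θ1 + θt)))
    (hβ : β = -Complex.exp (2 * Real.pi * b * (I * b / 2 + θ0 - θinf)))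
    (hγ : γ = -Complex.exp (2 * Real.pi * b * (I * b / 2 - θ1 + θt)))
    (hδ : δ = -Complex.exp (2 * Real.pi * b * (I * b / 2 + θ0 + θinf)))
    (hq : q = Complex.exp (2 * I * Real.pi * b ^ 2))
    (hσ : σn = I * (b + b⁻¹) / 2 + θ0 + θt + I * b * n) :
    Cfun b θ0 θ1 θt θinf σn
        = α * (1 - q ^ n) * (1 - β * γ * q ^ ((n : ℤ) - 1)) *
            (1 - β * δ * q ^ ((n : ℤ) - 1)) * (1 - γ * δ * q ^ ((n : ℤ) - 1)) /
            ((1 - α * β * γ * δ * q ^ (2 * (n : ℤ) - 2)) *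
              (1 - α * β * γ * δ * q ^ (2 * (n : ℤ) - 1)))
    ∧ Cfun b θ0 θ1 θt θinf (-σn)
        = (1 - α * β * q ^ n) * (1 - α * γ * q ^ n) * (1 - α * δ * q ^ n) *
            (1 - α * β * γ * δ * q ^ ((n : ℤ) - 1)) /
            (α * ((1 - α * β * γ * δ * q ^ (2 * (n : ℤ) - 1)) *
              (1 - α * β * γ * δ * q ^ (2 * n)))) := by
  have h : ParameterCorrespondence b θ0 θ1 θt θinf α β γ δ q := ⟨hα, hβ, hγ, hδ, hq⟩
  have prod_ne_one := h.prod_mul_zpow_ne_one hb.ne' hθ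
  rw [Cfun_eq_fusionCoeff, Cfun_eq_fusionCoeff]
  exact_mod_cast stmt19_general (n := n) (ofReal_ne_zero.2 hb.ne') h (mod_cast hσ)
    (prod_ne_one _) (prod_ne_one _) (prod_ne_one _)
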